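/- For every m̄ ∈ ℕ, every c̄ ≥ 1 and every k ∈ ℕ there exists a constant C > 0 (depending only on m̄, c̄ and k) with the following property: for every compact interval [a,b], every mesh 𝒯 of [a,b] that is piecewise quasi-uniform with parameters (m̄, c̄), and every v ∈ 𝕊_k(𝒯), one has ∫_a^b ∫_a^b (v(x) − v(y))²/(x − y)² dx dy ≤ C · ( Σ_{i=1}^{r} (sup_{x ∈ e_i} |v(x)|)² + log(1 + R(𝒯)) · (sup_{x ∈ [a,b]} |v(x)|)² ), where R(𝒯) is the ratio of the largest to the smallest element length of 𝒯; that is, the logarithmic factor is needed only in front of the global supremum norm. -/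

import Mathlib

open MeasureTheory Set

open scoped ENNReal NNReal

/-!
Both the integrand and the square of integration are symmetric, so each pair `(s, t)` may be charged
to whichever of its points has the value further from a chosen reference `c`: there
`|v s - v t| ≤ 2 |v s - c|`. Two points of one element are handled by the inverse estimate
`Lip v ≤ K sup |v| / h`. For points of adjacent elements, `c` is the value at the common node, and
the Lipschitz bound again cancels the singularity. For points separated by at least one element,
`c = 0`, and the kernel `(s - t)⁻²` integrated over an element of length `h` against everything
beyond the neighbouring element of length `h'` is `log (1 + h / h')`. Inside a quasi-uniform block
this logarithm is at most `log (1 + c̄)`, so it is absorbed by the local suprema; only the at most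
`m̄` block ends see `log (1 + R)`, and each of them is paid for with the global supremum.
-/

section Lintegral

theorem setLIntegral_le_two_mul_of_symm {α : Type*} [MeasurableSpace α] {μ : Measure α} [SFinite μ]
    {f : α × α → ℝ≥0∞} (hf : ∀ z, f z.swap = f z) {P Q : Set (α × α)}
    (hQ : Q ⊆ P ∪ Prod.swap ⁻¹' P) :
    ∫⁻ z in Q, f z ∂μ.prod μ ≤ 2 * ∫⁻ z in P, f z ∂μ.prod μ :=
  calc ∫⁻ z in Q, f z ∂μ.prod μ
      ≤ ∫⁻ z in P ∪ Prod.swap ⁻¹' P, f z ∂μ.prod μ := lintegral_mono_set hQ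
    _ ≤ ∫⁻ z in P, f z ∂μ.prod μ + ∫⁻ z in Prod.swap ⁻¹' P, f z.swap ∂μ.prod μ := by
        simpa only [hf] using lintegral_union_le f P (Prod.swap ⁻¹' P)
    _ = 2 * ∫⁻ z in P, f z ∂μ.prod μ := by
        rw [Measure.measurePreserving_swap.setLIntegral_comp_preimage_emb
          MeasurableEquiv.prodComm.measurableEmbedding f P, two_mul]

theorem setLIntegral_biUnion_finset_le {α ι : Type*} [MeasurableSpace α] {μ : Measure α}
    (T : Finset ι) (P : ι → Set α) (f : α → ℝ≥0∞) :
    ∫⁻ z in ⋃ i ∈ T, P i, f z ∂μ ≤ ∑ i ∈ T, ∫⁻ z in P i, f z ∂μ := by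
  have hunion : ⋃ i ∈ T, P i = ⋃ i : T, P i := biUnion_eq_iUnion (T : Set ι) fun i _ => P i
  rw [hunion, ← Finset.tsum_subtype]
  exact lintegral_iUnion_le _ _

theorem integral_integral_le_of_setLIntegral_prod_le {α β : Type*} [MeasurableSpace α]
    [MeasurableSpace β] {μ : Measure α} {ν : Measure β} [SFinite μ] [SFinite ν] {A : Set α}
    {B : Set β} {f : α → β → ℝ} {T : ℝ} (hT : 0 ≤ T)
    (hf : AEMeasurable (Function.uncurry f) ((μ.restrict A).prod (ν.restrict B)))
    (hle : ∫⁻ z in A ×ˢ B, ‖f z.1 z.2‖ₑ ∂μ.prod ν ≤ ENNReal.ofReal T) :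
    ∫ s in A, ∫ t in B, f s t ∂ν ∂μ ≤ T := by
  rw [← ENNReal.ofReal_le_ofReal_iff hT]
  calc ENNReal.ofReal (∫ s in A, ∫ t in B, f s t ∂ν ∂μ)
      ≤ ‖∫ s in A, ∫ t in B, f s t ∂ν ∂μ‖ₑ := Real.ofReal_le_enorm _
    _ ≤ ∫⁻ s in A, ∫⁻ t in B, ‖f s t‖ₑ ∂ν ∂μ :=
        (enorm_integral_le_lintegral_enorm _).trans
          (lintegral_mono fun s => enorm_integral_le_lintegral_enorm _)
    _ = ∫⁻ z in A ×ˢ B, ‖f z.1 z.2‖ₑ ∂μ.prod ν := by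
        rw [← Measure.prod_restrict]
        exact (lintegral_prod _ hf.enorm).symm
    _ ≤ ENNReal.ofReal T := hle

end Lintegral

section InverseSquareKernel

theorem lintegral_Ici_inv_sub_sq {s w : ℝ} (h : s < w) :
    ∫⁻ t in Ici w, ENNReal.ofReal (((s - t) ^ 2)⁻¹) = ENNReal.ofReal (w - s)⁻¹ := by
  have hderiv : ∀ t ∈ Ici w, HasDerivAt (fun t => (s - t)⁻¹) (((s - t) ^ 2)⁻¹) t := by
    intro t ht
    have hne : s - t ≠ 0 := (sub_neg.2 (h.trans_le ht)).ne
    simpa using ((hasDerivAt_id t).const_sub s).fun_inv hne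
  have hlim : Filter.Tendsto (fun t : ℝ => (s - t)⁻¹) Filter.atTop (nhds 0) :=
    tendsto_inv_atBot_zero.comp (Filter.tendsto_atBot_add_const_left _ s
      Filter.tendsto_neg_atTop_atBot)
  have hpos : ∀ t, 0 ≤ ((s - t) ^ 2)⁻¹ := fun t => by positivity
  rw [setLIntegral_congr Ioi_ae_eq_Ici.symm, ← ofReal_integral_eq_lintegral_ofReal
      (integrableOn_Ioi_deriv_of_nonneg' hderiv (fun t _ => hpos t) hlim)
      (Filter.Eventually.of_forall hpos),
    integral_Ioi_of_hasDerivAt_of_nonneg' hderiv (fun t _ => hpos t) hlim, zero_sub,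
    ← inv_neg, neg_sub]

theorem lintegral_Icc_inv_sub {x y w : ℝ} (hxy : x ≤ y) (hyw : y < w) :
    ∫⁻ s in Icc x y, ENNReal.ofReal (w - s)⁻¹ =
      ENNReal.ofReal (Real.log (1 + (y - x) / (w - y))) := by
  have hcont : ContinuousOn (fun s => (w - s)⁻¹) (Icc x y) :=
    ContinuousOn.inv₀ (by fun_prop) fun s hs => (sub_pos.2 (hs.2.trans_lt hyw)).ne'
  have hpos : ∀ᵐ s ∂volume.restrict (Icc x y), 0 ≤ (w - s)⁻¹ :=
    (ae_restrict_iff' measurableSet_Icc).2 (Filter.Eventually.of_forall fun s hs =>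
      inv_nonneg.2 (sub_nonneg.2 (hs.2.trans hyw.le)))
  have hratio : (w - x) / (w - y) = 1 + (y - x) / (w - y) := by
    have := (sub_pos.2 hyw).ne'
    field_simp
    ring
  rw [← ofReal_integral_eq_lintegral_ofReal hcont.integrableOn_Icc hpos,
    integral_Icc_eq_integral_Ioc, ← intervalIntegral.integral_of_le hxy,
    intervalIntegral.integral_comp_sub_left (fun u => u⁻¹) w,
    integral_inv_of_pos (by linarith) (by linarith), hratio]

theorem setLIntegral_Icc_prod_Ici_inv_sub_sq {x y w : ℝ} (hxy : x ≤ y) (hyw : y < w) :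
    ∫⁻ z in Icc x y ×ˢ Ici w, ENNReal.ofReal (((z.1 - z.2) ^ 2)⁻¹) =
      ENNReal.ofReal (Real.log (1 + (y - x) / (w - y))) := by
  rw [Measure.volume_eq_prod, setLIntegral_prod _ (by fun_prop), ← lintegral_Icc_inv_sub hxy hyw]
  exact setLIntegral_congr_fun measurableSet_Icc fun s hs =>
    lintegral_Ici_inv_sub_sq (hs.2.trans_lt hyw)

theorem setLIntegral_Icc_prod_Ici_dist_sq_div_sub_sq_le {x y : ℝ} (hxy : x ≤ y) :
    ∫⁻ z in Icc x y ×ˢ Ici y, ENNReal.ofReal ((y - z.1) ^ 2 / (z.1 - z.2) ^ 2) ≤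
      ENNReal.ofReal ((y - x) ^ 2) := by
  have hinner : ∀ s ∈ Icc x y, ∫⁻ t in Ici y, ENNReal.ofReal ((y - s) ^ 2 / (s - t) ^ 2) ≤
      ENNReal.ofReal (y - x) := by
    rintro s ⟨hxs, hsy⟩
    rcases hsy.eq_or_lt with rfl | hlt
    · simp
    calc ∫⁻ t in Ici y, ENNReal.ofReal ((y - s) ^ 2 / (s - t) ^ 2)
        = ENNReal.ofReal ((y - s) ^ 2) * ENNReal.ofReal (y - s)⁻¹ := by
          simp only [div_eq_mul_inv, ENNReal.ofReal_mul (sq_nonneg (y - s))]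
          rw [lintegral_const_mul _ (by fun_prop), lintegral_Ici_inv_sub_sq hlt]
      _ = ENNReal.ofReal (y - s) := by
          rw [← ENNReal.ofReal_mul (sq_nonneg _), sq, mul_assoc,
            mul_inv_cancel₀ (sub_pos.2 hlt).ne', mul_one]
      _ ≤ ENNReal.ofReal (y - x) := by gcongr
  rw [Measure.volume_eq_prod, setLIntegral_prod _ (by fun_prop)]
  calc ∫⁻ s in Icc x y, ∫⁻ t in Ici y, ENNReal.ofReal ((y - s) ^ 2 / (s - t) ^ 2)
      ≤ ∫⁻ _ in Icc x y, ENNReal.ofReal (y - x) := setLIntegral_mono measurable_const hinner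
    _ = ENNReal.ofReal ((y - x) ^ 2) := by
        rw [setLIntegral_const, Real.volume_Icc, ← ENNReal.ofReal_mul (sub_nonneg.2 hxy), sq]

end InverseSquareKernel

section Sequences

theorem Icc_succ_subset_Icc {α : Type*} [Preorder α] {ξ : ℕ → α} {r i : ℕ}
    (hξ : ∀ i < r, ξ i < ξ (i + 1)) (hi : i < r) : Icc (ξ i) (ξ (i + 1)) ⊆ Icc (ξ 0) (ξ r) :=
  have hmono := (strictMonoOn_Iic_of_lt_succ hξ).monotoneOn
  Icc_subset_Icc (hmono r.zero_le hi.le i.zero_le) (hmono hi self_mem_Iic hi)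

theorem exists_lt_mem_Ico_succ {α : Type*} [LinearOrder α] {f : ℕ → α} {n : ℕ} {x : α}
    (hx : x ∈ Ico (f 0) (f n)) : ∃ i < n, x ∈ Ico (f i) (f (i + 1)) := by
  induction n with
  | zero => simp at hx
  | succ n ih =>
    rcases lt_or_ge x (f n) with hlt | hge
    · obtain ⟨i, hi, hxi⟩ := ih ⟨hx.1, hlt⟩
      exact ⟨i, by omega, hxi⟩
    · exact ⟨n, n.lt_succ_self, hge, hx.2⟩

theorem sum_range_pred_add_succ_le {f : ℕ → ℝ} {r : ℕ} (hf : ∀ i < r, 0 ≤ f i) :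
    ∑ n ∈ Finset.range (r - 1), (f n + f (n + 1)) ≤ 2 * ∑ i ∈ Finset.range r, f i := by
  cases r with
  | zero => simp
  | succ r =>
    have hfirst := Finset.sum_range_succ f r
    have hlast := Finset.sum_range_succ' f r
    rw [Nat.add_sub_cancel, Finset.sum_add_distrib]
    linarith [hf 0 r.succ_pos, hf r r.lt_succ_self]

end Sequences

section LengthRatios

theorem div_le_sup'_div_inf' {ι : Type*} {s : Finset ι} (hs : s.Nonempty) {f : ι → ℝ}
    (hf : ∀ i ∈ s, 0 < f i) {i j : ι} (hi : i ∈ s) (hj : j ∈ s) :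
    f i / f j ≤ s.sup' hs f / s.inf' hs f :=
  div_le_div₀ ((hf i hi).le.trans (s.le_sup' f hi)) (s.le_sup' f hi)
    ((s.lt_inf'_iff hs).2 hf) (s.inf'_le f hj)

theorem log_one_add_div_pos {x y : ℝ} (hx : 0 < x) (hy : 0 < y) : 0 < Real.log (1 + x / y) :=
  Real.log_pos (lt_add_of_pos_right 1 (div_pos hx hy))

theorem exists_finset_neighbours_comparable {r m : ℕ} {h : ℕ → ℝ} {c : ℝ} {β : ℕ → ℕ}
    (hβ₀ : β 0 = 0) (hβm : β m = r)
    (hβ : ∀ l < m, ∀ i, β l ≤ i → i < β (l + 1) → ∀ j, β l ≤ j → j < β (l + 1) →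
      h i ≤ c * h j) :
    ∃ S : Finset ℕ, S.card ≤ m ∧ ∀ n, n + 1 < r → n ∉ S →
      h n ≤ c * h (n + 1) ∧ h (n + 1) ≤ c * h n := by
  refine ⟨(Finset.range m).image fun l => β (l + 1) - 1,
    Finset.card_image_le.trans_eq (Finset.card_range m), fun n hn hnS => ?_⟩
  obtain ⟨l, hl, hle, hlt⟩ := exists_lt_mem_Ico_succ (f := β) (n := m) (x := n)
    ⟨by omega, by omega⟩
  have hne : β (l + 1) - 1 ≠ n := fun h =>
    hnS (Finset.mem_image.2 ⟨l, Finset.mem_range.2 hl, h⟩)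
  exact ⟨hβ l hl n hle hlt (n + 1) (by omega) (by omega),
    hβ l hl (n + 1) (by omega) (by omega) n hle hlt⟩

theorem sq_mul_log_one_add_div_add_le {x y b A B : ℝ} (hx : 0 < x) (hy : 0 < y)
    (hxy : x / y ≤ b) (hyx : y / x ≤ b) :
    A ^ 2 * Real.log (1 + x / y) + B ^ 2 * Real.log (1 + y / x) ≤
      Real.log (1 + b) * (A ^ 2 + B ^ 2) := by
  rw [mul_add, mul_comm _ (A ^ 2), mul_comm _ (B ^ 2)]
  gcongr

theorem sq_mul_log_one_add_div_add_le_add_ite (P : Prop) [Decidable P] {x y c ρ A B N : ℝ}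
    (hc : 0 ≤ c) (hx : 0 < x) (hy : 0 < y) (hxρ : x / y ≤ ρ) (hyρ : y / x ≤ ρ) (hA : |A| ≤ N)
    (hB : |B| ≤ N) (hP : ¬P → x ≤ c * y ∧ y ≤ c * x) :
    A ^ 2 * Real.log (1 + x / y) + B ^ 2 * Real.log (1 + y / x) ≤
      Real.log (1 + c) * (A ^ 2 + B ^ 2) + if P then 2 * (Real.log (1 + ρ) * N ^ 2) else 0 := by
  split_ifs with h
  · have hlogc : 0 ≤ Real.log (1 + c) := Real.log_nonneg (by linarith)
    have hlogρ : 0 ≤ Real.log (1 + ρ) := Real.log_nonneg (by linarith [div_pos hx hy])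
    calc A ^ 2 * Real.log (1 + x / y) + B ^ 2 * Real.log (1 + y / x)
        ≤ Real.log (1 + ρ) * (|A| ^ 2 + |B| ^ 2) := by
          simpa only [sq_abs] using sq_mul_log_one_add_div_add_le hx hy hxρ hyρ
      _ ≤ Real.log (1 + ρ) * (N ^ 2 + N ^ 2) := by gcongr
      _ = 2 * (Real.log (1 + ρ) * N ^ 2) := by ring
      _ ≤ _ := le_add_of_nonneg_left (by positivity)
  · rw [add_zero]
    exact sq_mul_log_one_add_div_add_le hx hy ((div_le_iff₀ hy).2 (hP h).1)
      ((div_le_iff₀ hx).2 (hP h).2)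

theorem sum_sq_mul_log_one_add_div_succ_le {r : ℕ} {h M : ℕ → ℝ} {c ρ N : ℝ} {S : Finset ℕ}
    (hc : 0 ≤ c) (hρ₀ : 0 ≤ ρ) (hh : ∀ i < r, 0 < h i) (hρ : ∀ i < r, ∀ j < r, h i / h j ≤ ρ)
    (hM : ∀ i < r, |M i| ≤ N)
    (hS : ∀ n, n + 1 < r → n ∉ S → h n ≤ c * h (n + 1) ∧ h (n + 1) ≤ c * h n) :
    ∑ n ∈ Finset.range (r - 1), (M n ^ 2 * Real.log (1 + h n / h (n + 1)) +
        M (n + 1) ^ 2 * Real.log (1 + h (n + 1) / h n)) ≤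
      2 * Real.log (1 + c) * ∑ i ∈ Finset.range r, M i ^ 2 +
        2 * S.card * (Real.log (1 + ρ) * N ^ 2) := by
  have hlogc : 0 ≤ Real.log (1 + c) := Real.log_nonneg (by linarith)
  have hlogρ : 0 ≤ Real.log (1 + ρ) := Real.log_nonneg (by linarith)
  calc ∑ n ∈ Finset.range (r - 1), (M n ^ 2 * Real.log (1 + h n / h (n + 1)) +
        M (n + 1) ^ 2 * Real.log (1 + h (n + 1) / h n))
      ≤ Real.log (1 + c) * ∑ n ∈ Finset.range (r - 1), (M n ^ 2 + M (n + 1) ^ 2) +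
          ∑ n ∈ Finset.range (r - 1), (if n ∈ S then 2 * (Real.log (1 + ρ) * N ^ 2) else 0) := by
        rw [Finset.mul_sum, ← Finset.sum_add_distrib]
        refine Finset.sum_le_sum fun n hn => ?_
        have hn₁ : n + 1 < r := Nat.add_lt_of_lt_sub (Finset.mem_range.1 hn)
        have hn₀ : n < r := n.lt_succ_self.trans hn₁
        exact sq_mul_log_one_add_div_add_le_add_ite (n ∈ S) hc (hh n hn₀) (hh (n + 1) hn₁)
          (hρ n hn₀ (n + 1) hn₁) (hρ (n + 1) hn₁ n hn₀) (hM n hn₀) (hM (n + 1) hn₁) (hS n hn₁)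
    _ ≤ Real.log (1 + c) * (2 * ∑ i ∈ Finset.range r, M i ^ 2) +
          S.card * (2 * (Real.log (1 + ρ) * N ^ 2)) := by
        gcongr
        · exact sum_range_pred_add_succ_le fun i _ => sq_nonneg (M i)
        · rw [Finset.sum_ite_mem, Finset.sum_const, nsmul_eq_mul]
          gcongr
          exact Finset.inter_subset_right
    _ = _ := by ring

end LengthRatios

section InverseEstimate

theorem exists_lipschitzOnWith_polynomial_of_abs_le_on_nodes (k : ℕ) {X : Finset ℝ}
    (hX : k < X.card) {A : Set ℝ} (hA : Convex ℝ A) (hAc : IsCompact A) :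
    ∃ K : ℝ≥0, ∀ p : Polynomial ℝ, p.natDegree ≤ k → ∀ M : ℝ≥0, (∀ x ∈ X, |p.eval x| ≤ M) →
      LipschitzOnWith (K * M) (fun t => p.eval t) A := by
  have hbasis (x : ℝ) : ∃ K : ℝ≥0, LipschitzOnWith K (fun t => (Lagrange.basis X id x).eval t) A :=
    (Polynomial.contDiff_aeval _ 1).contDiffOn.exists_lipschitzOnWith one_ne_zero hA hAc
  choose K hK using hbasis
  refine ⟨∑ x ∈ X, K x, fun p hp M hM => LipschitzOnWith.of_dist_le_mul fun s hs t ht => ?_⟩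
  have hinterp (u : ℝ) : p.eval u = ∑ x ∈ X, p.eval x * (Lagrange.basis X id x).eval u := by
    have hdeg : p.degree < X.card :=
      p.degree_le_natDegree.trans_lt (by exact_mod_cast hp.trans_lt hX)
    conv_lhs => rw [Lagrange.eq_interpolate (Function.injective_id.injOn) hdeg]
    simp [Lagrange.interpolate_apply, Polynomial.eval_finsetSum]
  simp only [Real.dist_eq]
  calc |p.eval s - p.eval t|
      = |∑ x ∈ X, p.eval x *
          ((Lagrange.basis X id x).eval s - (Lagrange.basis X id x).eval t)| := by
        simp only [hinterp s, hinterp t, mul_sub, Finset.sum_sub_distrib]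
    _ ≤ ∑ x ∈ X, M * (K x * |s - t|) := by
        refine (Finset.abs_sum_le_sum_abs _ _).trans (Finset.sum_le_sum fun x hx => ?_)
        rw [abs_mul]
        exact mul_le_mul (hM x hx) ((hK x).dist_le_mul s hs t ht) (abs_nonneg _) M.2
    _ = ↑((∑ x ∈ X, K x) * M) * |s - t| := by
        push_cast
        rw [Finset.sum_mul, Finset.sum_mul]
        exact Finset.sum_congr rfl fun x _ => by ring

theorem exists_forall_lipschitzOnWith_polynomial_Icc (k : ℕ) :
    ∃ K : ℝ≥0, ∀ p : Polynomial ℝ, p.natDegree ≤ k → ∀ a b : ℝ, a < b → ∀ M : ℝ≥0,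
      (∀ t ∈ Ioo a b, |p.eval t| ≤ M) →
      LipschitzOnWith (K * M / (b - a).toNNReal) (fun t => p.eval t) (Icc a b) := by
  obtain ⟨X, hXsub, hXcard⟩ := (Ioo_infinite (zero_lt_one' ℝ)).exists_subset_card_eq (k + 1)
  obtain ⟨K, hK⟩ := exists_lipschitzOnWith_polynomial_of_abs_le_on_nodes k (X := X) (by omega)
    (convex_Icc (0 : ℝ) 1) isCompact_Icc
  refine ⟨K, fun p hp a b hab M hM => ?_⟩
  have hlen : 0 < b - a := sub_pos.2 hab
  let ℓ : Polynomial ℝ := Polynomial.C (b - a) * Polynomial.X + Polynomial.C a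
  have heval (u : ℝ) : (p.comp ℓ).eval u = p.eval ((b - a) * u + a) := by simp [ℓ]
  have hdeg : (p.comp ℓ).natDegree ≤ k := by
    rw [Polynomial.natDegree_comp, Polynomial.natDegree_linear hlen.ne', mul_one]
    exact hp
  have hunit : LipschitzOnWith (K * M) (fun u => (p.comp ℓ).eval u) (Icc 0 1) := by
    refine hK _ hdeg M fun u hu => ?_
    have hu' := hXsub hu
    rw [heval]
    exact hM _ ⟨by nlinarith [hu'.1], by nlinarith [hu'.2]⟩
  have hscale : LipschitzOnWith (b - a).toNNReal⁻¹ (fun t => (t - a) / (b - a)) (Icc a b) := by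
    refine LipschitzOnWith.of_dist_le_mul fun s _ t _ => le_of_eq ?_
    rw [Real.dist_eq, Real.dist_eq, ← sub_div, sub_sub_sub_cancel_right, abs_div,
      abs_of_pos hlen, NNReal.coe_inv, Real.coe_toNNReal _ hlen.le, div_eq_inv_mul]
  have hmaps : MapsTo (fun t => (t - a) / (b - a)) (Icc a b) (Icc 0 1) := fun t ht =>
    ⟨div_nonneg (sub_nonneg.2 ht.1) hlen.le, (div_le_one hlen).2 (by linarith [ht.2])⟩
  have hfactor : (fun t => p.eval t) =
      (fun u => (p.comp ℓ).eval u) ∘ fun t => (t - a) / (b - a) := by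
    funext t
    rw [Function.comp_apply, heval, mul_div_cancel₀ _ hlen.ne', sub_add_cancel]
  rw [hfactor, div_eq_mul_inv]
  exact hunit.comp hscale hmaps

end InverseEstimate

section LocalEstimates

/-- The integrand of the squared Gagliardo `H^{1/2}` seminorm of `v`, with values in `ℝ≥0∞` so
that its integral over a set of pairs needs no integrability side condition. -/
noncomputable def gagliardoDensity (v : ℝ → ℝ) (z : ℝ × ℝ) : ℝ≥0∞ :=
  ENNReal.ofReal ((v z.1 - v z.2) ^ 2 / (z.1 - z.2) ^ 2)

/-- The pairs `(s, t)` of a region whose first point carries the larger deviation of `v` from the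
reference value `c`; the difference `v s - v t` is then controlled by `v s - c` alone. -/
def dominatedPairs (v : ℝ → ℝ) (c : ℝ) (Q : Set (ℝ × ℝ)) : Set (ℝ × ℝ) :=
  {z ∈ Q | |v z.2 - c| ≤ |v z.1 - c|}

variable {v : ℝ → ℝ} {x y w : ℝ}

theorem gagliardoDensity_swap (v : ℝ → ℝ) (z : ℝ × ℝ) :
    gagliardoDensity v z.swap = gagliardoDensity v z := by
  rw [gagliardoDensity, gagliardoDensity, Prod.fst_swap, Prod.snd_swap, sub_sq_comm,
    sub_sq_comm z.2]

theorem gagliardoDensity_le_of_mem_dominatedPairs {c B : ℝ} {Q : Set (ℝ × ℝ)} {z : ℝ × ℝ}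
    (hz : z ∈ dominatedPairs v c Q) (hB : |v z.1 - c| ≤ B) :
    gagliardoDensity v z ≤ ENNReal.ofReal (4 * (B ^ 2 / (z.1 - z.2) ^ 2)) := by
  have hdiff : |v z.1 - v z.2| ≤ 2 * B := by
    have := abs_sub_le (v z.1) c (v z.2)
    rw [abs_sub_comm c] at this
    linarith [hz.2]
  have hsq : (v z.1 - v z.2) ^ 2 ≤ 4 * B ^ 2 := by
    rw [← sq_abs]
    calc |v z.1 - v z.2| ^ 2 ≤ (2 * B) ^ 2 := by gcongr
      _ = 4 * B ^ 2 := by ring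
  rw [gagliardoDensity, ← mul_div_assoc]
  gcongr

theorem setLIntegral_gagliardoDensity_Icc_prod_Icc_le {L : ℝ≥0}
    (hv : LipschitzOnWith L v (Icc x y)) :
    ∫⁻ z in Icc x y ×ˢ Icc x y, gagliardoDensity v z ≤ ENNReal.ofReal ((L * (y - x)) ^ 2) := by
  rcases lt_or_ge y x with hlt | hxy
  · simp [hlt]
  have hdensity : ∀ z ∈ Icc x y ×ˢ Icc x y, gagliardoDensity v z ≤ ENNReal.ofReal (L ^ 2) := by
    rintro z ⟨hs, ht⟩
    refine ENNReal.ofReal_le_ofReal (div_le_of_le_mul₀ (sq_nonneg _) (sq_nonneg _) ?_)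
    rw [← mul_pow, ← sq_abs, ← sq_abs ((L : ℝ) * _), abs_mul, NNReal.abs_eq]
    exact pow_le_pow_left₀ (abs_nonneg _) (hv.dist_le_mul _ hs _ ht) 2
  calc ∫⁻ z in Icc x y ×ˢ Icc x y, gagliardoDensity v z
      ≤ ∫⁻ _ in Icc x y ×ˢ Icc x y, ENNReal.ofReal (L ^ 2) :=
        setLIntegral_mono measurable_const hdensity
    _ = ENNReal.ofReal ((L * (y - x)) ^ 2) := by
        have hlen := sub_nonneg.2 hxy
        rw [setLIntegral_const, Measure.volume_eq_prod, Measure.prod_prod, Real.volume_Icc,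
          ← ENNReal.ofReal_mul hlen, ← ENNReal.ofReal_mul (sq_nonneg _), mul_pow, sq (y - x)]

theorem setLIntegral_gagliardoDensity_adjacent_right_le {L : ℝ≥0}
    (hv : LipschitzOnWith L v (Icc x y)) (hxy : x ≤ y) :
    ∫⁻ z in dominatedPairs v (v y) (Icc x y ×ˢ Ici y), gagliardoDensity v z ≤
      ENNReal.ofReal (4 * (L * (y - x)) ^ 2) := by
  have hdensity : ∀ z ∈ dominatedPairs v (v y) (Icc x y ×ˢ Ici y), gagliardoDensity v z ≤
      ENNReal.ofReal (4 * L ^ 2) * ENNReal.ofReal ((y - z.1) ^ 2 / (z.1 - z.2) ^ 2) := by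
    intro z hz
    have hs := hz.1.1
    have hdev : |v z.1 - v y| ≤ L * (y - z.1) := by
      have := hv.dist_le_mul _ hs y (right_mem_Icc.2 hxy)
      rwa [Real.dist_eq, Real.dist_eq, abs_sub_comm z.1, abs_of_nonneg (sub_nonneg.2 hs.2)] at this
    refine (gagliardoDensity_le_of_mem_dominatedPairs hz hdev).trans_eq ?_
    rw [← ENNReal.ofReal_mul (by positivity), mul_pow]
    ring_nf
  calc ∫⁻ z in dominatedPairs v (v y) (Icc x y ×ˢ Ici y), gagliardoDensity v z
      ≤ ∫⁻ z in dominatedPairs v (v y) (Icc x y ×ˢ Ici y),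
          ENNReal.ofReal (4 * L ^ 2) * ENNReal.ofReal ((y - z.1) ^ 2 / (z.1 - z.2) ^ 2) :=
        setLIntegral_mono (by fun_prop) hdensity
    _ ≤ ∫⁻ z in Icc x y ×ˢ Ici y,
          ENNReal.ofReal (4 * L ^ 2) * ENNReal.ofReal ((y - z.1) ^ 2 / (z.1 - z.2) ^ 2) :=
        lintegral_mono_set (sep_subset _ _)
    _ ≤ ENNReal.ofReal (4 * L ^ 2) * ENNReal.ofReal ((y - x) ^ 2) := by
        rw [lintegral_const_mul _ (by fun_prop)]
        gcongr
        exact setLIntegral_Icc_prod_Ici_dist_sq_div_sub_sq_le hxy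
    _ = ENNReal.ofReal (4 * (L * (y - x)) ^ 2) := by
        rw [← ENNReal.ofReal_mul (by positivity), mul_pow, mul_assoc]

theorem setLIntegral_gagliardoDensity_separated_right_le {M : ℝ}
    (hM : ∀ s ∈ Icc x y, |v s| ≤ M) (hxy : x ≤ y) (hyw : y < w) :
    ∫⁻ z in dominatedPairs v 0 (Icc x y ×ˢ Ici w), gagliardoDensity v z ≤
      ENNReal.ofReal (4 * (M ^ 2 * Real.log (1 + (y - x) / (w - y)))) := by
  have hdensity : ∀ z ∈ dominatedPairs v 0 (Icc x y ×ˢ Ici w), gagliardoDensity v z ≤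
      ENNReal.ofReal (4 * M ^ 2) * ENNReal.ofReal (((z.1 - z.2) ^ 2)⁻¹) := by
    intro z hz
    refine (gagliardoDensity_le_of_mem_dominatedPairs hz
      (by simpa only [sub_zero] using hM _ hz.1.1)).trans_eq ?_
    rw [← ENNReal.ofReal_mul (by positivity), div_eq_mul_inv, mul_assoc]
  calc ∫⁻ z in dominatedPairs v 0 (Icc x y ×ˢ Ici w), gagliardoDensity v z
      ≤ ∫⁻ z in dominatedPairs v 0 (Icc x y ×ˢ Ici w),
          ENNReal.ofReal (4 * M ^ 2) * ENNReal.ofReal (((z.1 - z.2) ^ 2)⁻¹) :=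
        setLIntegral_mono (by fun_prop) hdensity
    _ ≤ ∫⁻ z in Icc x y ×ˢ Ici w,
          ENNReal.ofReal (4 * M ^ 2) * ENNReal.ofReal (((z.1 - z.2) ^ 2)⁻¹) :=
        lintegral_mono_set (sep_subset _ _)
    _ = ENNReal.ofReal (4 * (M ^ 2 * Real.log (1 + (y - x) / (w - y)))) := by
        rw [lintegral_const_mul _ (by fun_prop), setLIntegral_Icc_prod_Ici_inv_sub_sq hxy hyw,
          ← ENNReal.ofReal_mul (by positivity), mul_assoc]

theorem setLIntegral_gagliardoDensity_dominatedPairs_reflect (v : ℝ → ℝ) (c x y w : ℝ) :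
    ∫⁻ z in dominatedPairs v c (Icc x y ×ˢ Iic w), gagliardoDensity v z =
      ∫⁻ z in dominatedPairs (fun t => v (-t)) c (Icc (-y) (-x) ×ˢ Ici (-w)),
        gagliardoDensity (fun t => v (-t)) z := by
  have hpre : Neg.neg ⁻¹' dominatedPairs (fun t => v (-t)) c (Icc (-y) (-x) ×ˢ Ici (-w)) =
      dominatedPairs v c (Icc x y ×ˢ Iic w) := by
    ext z
    simp [dominatedPairs, and_comm]
  rw [← (Measure.measurePreserving_neg volume).setLIntegral_comp_preimage_emb
    (MeasurableEquiv.neg _).measurableEmbedding (gagliardoDensity fun t => v (-t)), hpre]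
  refine lintegral_congr fun z => ?_
  rw [gagliardoDensity, gagliardoDensity, Prod.fst_neg, Prod.snd_neg, neg_neg, neg_neg,
    neg_sub_neg, sub_sq_comm z.2]

theorem setLIntegral_gagliardoDensity_adjacent_left_le {L : ℝ≥0}
    (hv : LipschitzOnWith L v (Icc x y)) (hxy : x ≤ y) :
    ∫⁻ z in dominatedPairs v (v x) (Icc x y ×ˢ Iic x), gagliardoDensity v z ≤
      ENNReal.ofReal (4 * (L * (y - x)) ^ 2) := by
  have hneg : LipschitzOnWith L (fun t => v (-t)) (Icc (-y) (-x)) := by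
    rw [← mul_one L]
    exact hv.comp (LipschitzWith.neg LipschitzWith.id).lipschitzOnWith
      fun t ht => ⟨le_neg.1 ht.2, neg_le.1 ht.1⟩
  rw [setLIntegral_gagliardoDensity_dominatedPairs_reflect]
  simpa only [neg_neg, neg_sub_neg] using
    setLIntegral_gagliardoDensity_adjacent_right_le hneg (neg_le_neg hxy)

theorem setLIntegral_gagliardoDensity_separated_left_le {M : ℝ}
    (hM : ∀ s ∈ Icc x y, |v s| ≤ M) (hxy : x ≤ y) (hwx : w < x) :
    ∫⁻ z in dominatedPairs v 0 (Icc x y ×ˢ Iic w), gagliardoDensity v z ≤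
      ENNReal.ofReal (4 * (M ^ 2 * Real.log (1 + (y - x) / (x - w)))) := by
  rw [setLIntegral_gagliardoDensity_dominatedPairs_reflect]
  have hneg : ∀ s ∈ Icc (-y) (-x), |v (-s)| ≤ M := fun s hs =>
    hM _ ⟨le_neg.1 hs.2, neg_le.1 hs.1⟩
  simpa only [neg_sub_neg] using setLIntegral_gagliardoDensity_separated_right_le
    hneg (neg_le_neg hxy) (neg_lt_neg hwx)

end LocalEstimates

section NodalDecomposition

/-- The pairs charged to an interior mesh node `y` with neighbouring nodes `x` and `z`: pairs whose
dominating point lies in one of the two elements meeting at `y` and whose other point lies beyond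
`y`, compared through the value `v y`, or beyond the opposite neighbour, compared through `0`. -/
def nodePairs (v : ℝ → ℝ) (x y z : ℝ) : Set (ℝ × ℝ) :=
  (dominatedPairs v (v y) (Icc x y ×ˢ Ici y) ∪ dominatedPairs v 0 (Icc x y ×ˢ Ici z)) ∪
    (dominatedPairs v (v y) (Icc y z ×ˢ Iic y) ∪ dominatedPairs v 0 (Icc y z ×ˢ Iic x))

/-- The pairs within a common element of the mesh `ξ 0 < ⋯ < ξ r`, together with those charged to
one of its interior nodes. -/
def chargedPairs (v : ℝ → ℝ) (ξ : ℕ → ℝ) (r : ℕ) : Set (ℝ × ℝ) :=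
  (⋃ i ∈ Finset.range r, Icc (ξ i) (ξ (i + 1)) ×ˢ Icc (ξ i) (ξ (i + 1))) ∪
    ⋃ n ∈ Finset.range (r - 1), nodePairs v (ξ n) (ξ (n + 1)) (ξ (n + 2))

variable {v : ℝ → ℝ}

theorem setLIntegral_gagliardoDensity_nodePairs_le {x y z : ℝ} (hxy : x < y) (hyz : y < z)
    {L₁ L₂ : ℝ≥0} (hv₁ : LipschitzOnWith L₁ v (Icc x y)) (hv₂ : LipschitzOnWith L₂ v (Icc y z))
    {M₁ M₂ : ℝ} (hM₁ : ∀ s ∈ Icc x y, |v s| ≤ M₁) (hM₂ : ∀ s ∈ Icc y z, |v s| ≤ M₂) :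
    ∫⁻ p in nodePairs v x y z, gagliardoDensity v p ≤
      ENNReal.ofReal (4 * ((L₁ * (y - x)) ^ 2 + (L₂ * (z - y)) ^ 2 +
        (M₁ ^ 2 * Real.log (1 + (y - x) / (z - y)) +
          M₂ ^ 2 * Real.log (1 + (z - y) / (y - x))))) := by
  have hlog₁ := log_one_add_div_pos (sub_pos.2 hxy) (sub_pos.2 hyz)
  have hlog₂ := log_one_add_div_pos (sub_pos.2 hyz) (sub_pos.2 hxy)
  calc ∫⁻ p in nodePairs v x y z, gagliardoDensity v p
      ≤ ((∫⁻ p in dominatedPairs v (v y) (Icc x y ×ˢ Ici y), gagliardoDensity v p) +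
          (∫⁻ p in dominatedPairs v 0 (Icc x y ×ˢ Ici z), gagliardoDensity v p)) +
        ((∫⁻ p in dominatedPairs v (v y) (Icc y z ×ˢ Iic y), gagliardoDensity v p) +
          (∫⁻ p in dominatedPairs v 0 (Icc y z ×ˢ Iic x), gagliardoDensity v p)) :=
        (lintegral_union_le _ _ _).trans
          (add_le_add (lintegral_union_le _ _ _) (lintegral_union_le _ _ _))
    _ ≤ (ENNReal.ofReal (4 * (L₁ * (y - x)) ^ 2) +
          ENNReal.ofReal (4 * (M₁ ^ 2 * Real.log (1 + (y - x) / (z - y))))) +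
        (ENNReal.ofReal (4 * (L₂ * (z - y)) ^ 2) +
          ENNReal.ofReal (4 * (M₂ ^ 2 * Real.log (1 + (z - y) / (y - x))))) :=
        add_le_add
          (add_le_add (setLIntegral_gagliardoDensity_adjacent_right_le hv₁ hxy.le)
            (setLIntegral_gagliardoDensity_separated_right_le hM₁ hxy.le hyz))
          (add_le_add (setLIntegral_gagliardoDensity_adjacent_left_le hv₂ hyz.le)
            (setLIntegral_gagliardoDensity_separated_left_le hM₂ hyz.le hxy))
    _ = _ := by
        rw [← ENNReal.ofReal_add (by positivity) (by positivity),
          ← ENNReal.ofReal_add (by positivity) (by positivity),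
          ← ENNReal.ofReal_add (by positivity) (by positivity)]
        ring_nf

theorem Ico_prod_Ico_subset_chargedPairs_union_swap (v : ℝ → ℝ) {ξ : ℕ → ℝ} {r : ℕ}
    (hξ : MonotoneOn ξ (Iic r)) :
    Ico (ξ 0) (ξ r) ×ˢ Ico (ξ 0) (ξ r) ⊆
      chargedPairs v ξ r ∪ Prod.swap ⁻¹' chargedPairs v ξ r := by
  have hnode {n : ℕ} {z : ℝ × ℝ} (hn : n + 1 < r)
      (hz : z ∈ nodePairs v (ξ n) (ξ (n + 1)) (ξ (n + 2))) : z ∈ chargedPairs v ξ r :=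
    .inr (mem_biUnion (Finset.mem_coe.2 (Finset.mem_range.2 (by omega))) hz)
  have hordered {i j : ℕ} (hij : i ≤ j) (hj : j < r) {s t : ℝ}
      (hs : s ∈ Icc (ξ i) (ξ (i + 1))) (ht : t ∈ Icc (ξ j) (ξ (j + 1))) :
      (s, t) ∈ chargedPairs v ξ r ∨ (t, s) ∈ chargedPairs v ξ r := by
    obtain rfl | rfl | hsep : j = i ∨ j = i + 1 ∨ i + 2 ≤ j := by omega
    · exact .inl (.inl (mem_biUnion (Finset.mem_coe.2 (Finset.mem_range.2 hj)) ⟨hs, ht⟩))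
    · rcases le_total |v t - v (ξ (i + 1))| |v s - v (ξ (i + 1))| with hdom | hdom
      · exact .inl (hnode hj (.inl (.inl ⟨⟨hs, ht.1⟩, hdom⟩)))
      · exact .inr (hnode hj (.inr (.inl ⟨⟨ht, hs.2⟩, hdom⟩)))
    · obtain ⟨n, rfl⟩ : ∃ n, j = n + 1 := ⟨j - 1, by omega⟩
      have hleft : ξ (i + 2) ≤ t := (hξ (by simp; omega) (by simp; omega) hsep).trans ht.1
      have hright : s ≤ ξ n := hs.2.trans (hξ (by simp; omega) (by simp; omega) (by omega))
      rcases le_total |v t - 0| |v s - 0| with hdom | hdom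
      · exact .inl (hnode (by omega) (.inl (.inr ⟨⟨hs, hleft⟩, hdom⟩)))
      · exact .inr (hnode hj (.inr (.inr ⟨⟨ht, hright⟩, hdom⟩)))
  rintro ⟨s, t⟩ ⟨hs, ht⟩
  obtain ⟨i, hi, hsi⟩ := exists_lt_mem_Ico_succ hs
  obtain ⟨j, hj, htj⟩ := exists_lt_mem_Ico_succ ht
  rcases le_total i j with hij | hji
  · exact hordered hij hj (Ico_subset_Icc_self hsi) (Ico_subset_Icc_self htj)
  · exact (hordered hji hi (Ico_subset_Icc_self htj) (Ico_subset_Icc_self hsi)).symm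

theorem setLIntegral_gagliardoDensity_chargedPairs_le {ξ : ℕ → ℝ} {r : ℕ} {D B : ℕ → ℝ}
    (hD₀ : ∀ i < r, 0 ≤ D i) (hB₀ : ∀ n, n + 1 < r → 0 ≤ B n)
    (hD : ∀ i < r, ∫⁻ z in Icc (ξ i) (ξ (i + 1)) ×ˢ Icc (ξ i) (ξ (i + 1)), gagliardoDensity v z ≤
      ENNReal.ofReal (D i))
    (hB : ∀ n, n + 1 < r → ∫⁻ z in nodePairs v (ξ n) (ξ (n + 1)) (ξ (n + 2)),
      gagliardoDensity v z ≤ ENNReal.ofReal (4 * (D n + D (n + 1) + B n))) :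
    ∫⁻ z in chargedPairs v ξ r, gagliardoDensity v z ≤
      ENNReal.ofReal (9 * ∑ i ∈ Finset.range r, D i +
        4 * ∑ n ∈ Finset.range (r - 1), B n) := by
  have hlt {n : ℕ} (hn : n ∈ Finset.range (r - 1)) : n + 1 < r := by
    have := Finset.mem_range.1 hn
    omega
  have hterm : ∀ n ∈ Finset.range (r - 1), 0 ≤ 4 * (D n + D (n + 1) + B n) := fun n hn => by
    linarith [hD₀ n (by have := hlt hn; omega), hD₀ (n + 1) (hlt hn), hB₀ n (hlt hn)]
  have hDsum : ∀ i ∈ Finset.range r, 0 ≤ D i := fun i hi => hD₀ i (Finset.mem_range.1 hi)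
  calc ∫⁻ z in chargedPairs v ξ r, gagliardoDensity v z
      ≤ ∑ i ∈ Finset.range r, ENNReal.ofReal (D i) +
        ∑ n ∈ Finset.range (r - 1), ENNReal.ofReal (4 * (D n + D (n + 1) + B n)) := by
        refine (lintegral_union_le _ _ _).trans (add_le_add ?_ ?_) <;>
          refine (setLIntegral_biUnion_finset_le _ _ _).trans (Finset.sum_le_sum fun n hn => ?_)
        · exact hD n (Finset.mem_range.1 hn)
        · exact hB n (hlt hn)
    _ = ENNReal.ofReal (∑ i ∈ Finset.range r, D i +
          ∑ n ∈ Finset.range (r - 1), 4 * (D n + D (n + 1) + B n)) := by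
        rw [ENNReal.ofReal_add (Finset.sum_nonneg hDsum) (Finset.sum_nonneg hterm),
          ENNReal.ofReal_sum_of_nonneg hDsum, ENNReal.ofReal_sum_of_nonneg hterm]
    _ ≤ _ := by
        refine ENNReal.ofReal_le_ofReal ?_
        rw [← Finset.mul_sum, Finset.sum_add_distrib]
        -- each element meets at most two interior nodes, so `D i` is counted `1 + 2 * 4` times
        linarith [sum_range_pred_add_succ_le hD₀]

theorem setLIntegral_gagliardoDensity_Ico_prod_Ico_le {ξ : ℕ → ℝ} {r : ℕ}
    (hξ : ∀ i < r, ξ i < ξ (i + 1)) {L : ℕ → ℝ≥0} {M : ℕ → ℝ}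
    (hL : ∀ i < r, LipschitzOnWith (L i) v (Icc (ξ i) (ξ (i + 1))))
    (hM : ∀ i < r, ∀ s ∈ Icc (ξ i) (ξ (i + 1)), |v s| ≤ M i) :
    ∫⁻ z in Ico (ξ 0) (ξ r) ×ˢ Ico (ξ 0) (ξ r), gagliardoDensity v z ≤
      ENNReal.ofReal (2 * (9 * ∑ i ∈ Finset.range r, (L i * (ξ (i + 1) - ξ i)) ^ 2 +
        4 * ∑ n ∈ Finset.range (r - 1),
          (M n ^ 2 * Real.log (1 + (ξ (n + 1) - ξ n) / (ξ (n + 2) - ξ (n + 1))) +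
            M (n + 1) ^ 2 * Real.log (1 + (ξ (n + 2) - ξ (n + 1)) / (ξ (n + 1) - ξ n))))) := by
  rw [ENNReal.ofReal_mul zero_le_two, ENNReal.ofReal_ofNat]
  refine (setLIntegral_le_two_mul_of_symm (gagliardoDensity_swap v)
    (Ico_prod_Ico_subset_chargedPairs_union_swap v
      (strictMonoOn_Iic_of_lt_succ hξ).monotoneOn)).trans
    (mul_le_mul_right ?_ 2)
  refine setLIntegral_gagliardoDensity_chargedPairs_le (fun i _ => sq_nonneg _) (fun n hn => ?_)
    (fun i hi => setLIntegral_gagliardoDensity_Icc_prod_Icc_le (hL i hi)) fun n hn => ?_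
  · have hlog₁ := log_one_add_div_pos (sub_pos.2 (hξ n (by omega))) (sub_pos.2 (hξ (n + 1) hn))
    have hlog₂ := log_one_add_div_pos (sub_pos.2 (hξ (n + 1) hn)) (sub_pos.2 (hξ n (by omega)))
    positivity
  · exact setLIntegral_gagliardoDensity_nodePairs_le (hξ n (by omega)) (hξ (n + 1) hn)
      (hL n (by omega)) (hL (n + 1) hn) (hM n (by omega)) (hM (n + 1) hn)

end NodalDecomposition

section Spline

/-- The supremum of `|v|` over `A`, as a nonnegative real; being a real `sSup`, it is `0` when
`|v|` is unbounded on `A`. -/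
noncomputable def supAbs (v : ℝ → ℝ) (A : Set ℝ) : ℝ≥0 :=
  ⟨sSup ((fun t => |v t|) '' A), Real.sSup_nonneg (by rintro _ ⟨t, -, rfl⟩; exact abs_nonneg _)⟩

variable {v : ℝ → ℝ}

theorem abs_le_supAbs_Ioo {x y t : ℝ} (hxy : x < y) (hv : ContinuousOn v (Icc x y))
    (ht : t ∈ Icc x y) : |v t| ≤ supAbs v (Ioo x y) := by
  have hbdd : BddAbove ((fun t => |v t|) '' Ioo x y) :=
    (isCompact_Icc.image_of_continuousOn hv.abs).bddAbove.mono (image_mono Ioo_subset_Icc_self)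
  rw [← closure_Ioo hxy.ne] at hv ht
  exact le_on_closure (fun s hs => le_csSup hbdd (mem_image_of_mem _ hs)) hv.abs
    continuousOn_const ht

theorem supAbs_mono {A B : Set ℝ} (hAB : A ⊆ B) (hB : IsCompact B) (hv : ContinuousOn v B) :
    supAbs v A ≤ supAbs v B := by
  refine Real.sSup_le ?_ (supAbs v B).2
  rintro _ ⟨t, ht, rfl⟩
  exact le_csSup (hB.image_of_continuousOn hv.abs).bddAbove (mem_image_of_mem _ (hAB ht))

theorem exists_lipschitzOnWith_of_eqOn_polynomial (k : ℕ) :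
    ∃ K : ℝ≥0, ∀ (v : ℝ → ℝ) (x y : ℝ), x < y → ContinuousOn v (Icc x y) →
      (∃ p : Polynomial ℝ, p.natDegree ≤ k ∧ ∀ t ∈ Ioo x y, v t = p.eval t) →
      LipschitzOnWith (K * supAbs v (Ioo x y) / (y - x).toNNReal) v (Icc x y) := by
  obtain ⟨K, hK⟩ := exists_forall_lipschitzOnWith_polynomial_Icc k
  refine ⟨K, fun v x y hxy hv => ?_⟩
  rintro ⟨p, hp, hvp⟩
  have heq : EqOn v (fun t => p.eval t) (Icc x y) :=
    EqOn.of_subset_closure hvp hv p.continuousOn Ioo_subset_Icc_self (closure_Ioo hxy.ne).ge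
  have hlip := hK p hp x y hxy (supAbs v (Ioo x y)) fun t ht =>
    hvp t ht ▸ abs_le_supAbs_Ioo hxy hv (Ioo_subset_Icc_self ht)
  intro s hs t ht
  rw [heq hs, heq ht]
  exact hlip hs ht

theorem integral_integral_gagliardo_le {a b T : ℝ} (hv : ContinuousOn v (Ioo a b)) (hT : 0 ≤ T)
    (hle : ∫⁻ z in Ico a b ×ˢ Ico a b, gagliardoDensity v z ≤ ENNReal.ofReal T) :
    ∫ s in Ioo a b, ∫ t in Ioo a b, (v s - v t) ^ 2 / (s - t) ^ 2 ≤ T := by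
  have hmeas : AEMeasurable v (volume.restrict (Ioo a b)) := hv.aemeasurable measurableSet_Ioo
  refine integral_integral_le_of_setLIntegral_prod_le hT ?_ ?_
  · exact ((hmeas.comp_fst.sub hmeas.comp_snd).pow_const 2).div
      ((measurable_fst.sub measurable_snd).pow_const 2).aemeasurable
  · refine le_trans ?_ hle
    rw [Measure.volume_eq_prod]
    refine (lintegral_mono_set (prod_mono Ioo_subset_Ico_self Ioo_subset_Ico_self)).trans_eq ?_
    exact lintegral_congr fun z => Real.enorm_of_nonneg (by positivity)

theorem setLIntegral_gagliardoDensity_le_of_neighbours_comparable {ξ : ℕ → ℝ} {r : ℕ}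
    (hξ : ∀ i < r, ξ i < ξ (i + 1)) {K N : ℝ≥0} {M : ℕ → ℝ≥0}
    (hL : ∀ i < r, LipschitzOnWith (K * M i / (ξ (i + 1) - ξ i).toNNReal) v
      (Icc (ξ i) (ξ (i + 1))))
    (hM : ∀ i < r, ∀ s ∈ Icc (ξ i) (ξ (i + 1)), |v s| ≤ M i) (hMN : ∀ i < r, M i ≤ N)
    {c ρ : ℝ} (hc : 0 ≤ c) (hρ₀ : 0 ≤ ρ)
    (hρ : ∀ i < r, ∀ j < r, (ξ (i + 1) - ξ i) / (ξ (j + 1) - ξ j) ≤ ρ) {S : Finset ℕ}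
    (hS : ∀ n, n + 1 < r → n ∉ S → ξ (n + 1) - ξ n ≤ c * (ξ (n + 2) - ξ (n + 1)) ∧
      ξ (n + 2) - ξ (n + 1) ≤ c * (ξ (n + 1) - ξ n)) :
    ∫⁻ z in Ico (ξ 0) (ξ r) ×ˢ Ico (ξ 0) (ξ r), gagliardoDensity v z ≤
      ENNReal.ofReal ((18 * K ^ 2 + 16 * Real.log (1 + c)) * ∑ i ∈ Finset.range r, (M i : ℝ) ^ 2 +
        16 * S.card * (Real.log (1 + ρ) * N ^ 2)) := by
  refine (setLIntegral_gagliardoDensity_Ico_prod_Ico_le hξ hL hM).trans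
    (ENNReal.ofReal_le_ofReal ?_)
  have hlen : ∀ i < r, 0 < ξ (i + 1) - ξ i := fun i hi => sub_pos.2 (hξ i hi)
  have hinverse : ∑ i ∈ Finset.range r,
      (((K * M i / (ξ (i + 1) - ξ i).toNNReal : ℝ≥0) : ℝ) * (ξ (i + 1) - ξ i)) ^ 2 =
      K ^ 2 * ∑ i ∈ Finset.range r, (M i : ℝ) ^ 2 := by
    rw [Finset.mul_sum]
    refine Finset.sum_congr rfl fun i hi => ?_
    have hi := hlen i (Finset.mem_range.1 hi)
    rw [NNReal.coe_div, NNReal.coe_mul, Real.coe_toNNReal _ hi.le, div_mul_cancel₀ _ hi.ne',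
      mul_pow]
  have hlogs := sum_sq_mul_log_one_add_div_succ_le (M := fun i => (M i : ℝ)) hc hρ₀ hlen hρ
    (fun i hi => (abs_of_nonneg (M i).2).trans_le (hMN i hi)) hS
  rw [hinverse]
  calc _ ≤ 2 * (9 * (K ^ 2 * ∑ i ∈ Finset.range r, (M i : ℝ) ^ 2) +
        4 * (2 * Real.log (1 + c) * ∑ i ∈ Finset.range r, (M i : ℝ) ^ 2 +
          2 * S.card * (Real.log (1 + ρ) * N ^ 2))) := by
        gcongr
        exact hlogs
    _ = _ := by ring

theorem integral_integral_gagliardo_le_of_inverse_estimate {ξ : ℕ → ℝ} {r : ℕ}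
    (hξ : ∀ i < r, ξ i < ξ (i + 1)) (hv : ContinuousOn v (Icc (ξ 0) (ξ r))) {K : ℝ≥0}
    (hL : ∀ i < r, LipschitzOnWith
      (K * supAbs v (Ioo (ξ i) (ξ (i + 1))) / (ξ (i + 1) - ξ i).toNNReal) v
      (Icc (ξ i) (ξ (i + 1))))
    {c ρ : ℝ} (hc : 0 ≤ c) (hρ₀ : 0 ≤ ρ)
    (hρ : ∀ i < r, ∀ j < r, (ξ (i + 1) - ξ i) / (ξ (j + 1) - ξ j) ≤ ρ) {S : Finset ℕ}
    (hS : ∀ n, n + 1 < r → n ∉ S → ξ (n + 1) - ξ n ≤ c * (ξ (n + 2) - ξ (n + 1)) ∧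
      ξ (n + 2) - ξ (n + 1) ≤ c * (ξ (n + 1) - ξ n)) {m : ℕ} (hSm : S.card ≤ m) :
    ∫ s in Ioo (ξ 0) (ξ r), ∫ t in Ioo (ξ 0) (ξ r), (v s - v t) ^ 2 / (s - t) ^ 2 ≤
      (18 * K ^ 2 + 16 * Real.log (1 + c) + 16 * m) *
        (∑ i ∈ Finset.range r, (supAbs v (Ioo (ξ i) (ξ (i + 1))) : ℝ) ^ 2 +
          Real.log (1 + ρ) * supAbs v (Icc (ξ 0) (ξ r)) ^ 2) := by
  have hlogc : 0 ≤ Real.log (1 + c) := Real.log_nonneg (by linarith)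
  have hlogρ : 0 ≤ Real.log (1 + ρ) := Real.log_nonneg (by linarith)
  refine integral_integral_gagliardo_le (hv.mono Ioo_subset_Icc_self) (by positivity) ?_
  have hvi {i : ℕ} (hi : i < r) := hv.mono (Icc_succ_subset_Icc hξ hi)
  refine (setLIntegral_gagliardoDensity_le_of_neighbours_comparable hξ hL
    (fun i hi s hs => abs_le_supAbs_Ioo (hξ i hi) (hvi hi) hs)
    (fun i hi => supAbs_mono (Ioo_subset_Icc_self.trans (Icc_succ_subset_Icc hξ hi))
      isCompact_Icc hv)
    hc hρ₀ hρ hS).trans (ENNReal.ofReal_le_ofReal ?_)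
  set A := ∑ i ∈ Finset.range r, (supAbs v (Ioo (ξ i) (ξ (i + 1))) : ℝ) ^ 2
  set B := Real.log (1 + ρ) * (supAbs v (Icc (ξ 0) (ξ r)) : ℝ) ^ 2
  set D := 18 * (K : ℝ) ^ 2 + 16 * Real.log (1 + c)
  have hD : 0 ≤ D := by positivity
  calc D * A + 16 * S.card * B
      ≤ (D + 16 * m) * A + (D + 16 * m) * B := by
        have hm : (S.card : ℝ) ≤ m := by exact_mod_cast hSm
        refine add_le_add (mul_le_mul_of_nonneg_right ?_ (by positivity))
          (mul_le_mul_of_nonneg_right ?_ (by positivity)) <;> linarith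
    _ = _ := (mul_add _ _ _).symm

end Spline

/-- For every `mBar ∈ ℕ`, `cBar ≥ 1`, `k ∈ ℕ` there is `C > 0` such that for
every compact interval `[a,b]`, every piecewise quasi-uniform mesh (with parameters
`(mBar, cBar)`) of `[a,b]`, and every continuous piecewise polynomial `v` of degree `≤ k`,
the squared Gagliardo `H^{1/2}` seminorm of `v` is bounded by
`C · ( Σ_i (sup_{e_i} |v|)² + log(1 + R) · (sup_{[a,b]} |v|)² )`, where `R` is the ratio
between the largest and the smallest element length: the logarithmic factor is needed
only in front of the global supremum norm. -/
theorem gagliardo_bound_local_sup_plus_log_global_sup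
    (mBar : ℕ) (cBar : ℝ) (hc : 1 ≤ cBar) (k : ℕ) :
    ∃ C : ℝ, 0 < C ∧
      ∀ (a b : ℝ) (_hab : a < b) (r : ℕ) (hr : 0 < r) (ξ : ℕ → ℝ)
        (_h0 : ξ 0 = a) (_hr' : ξ r = b) (_hmono : ∀ i < r, ξ i < ξ (i + 1))
        -- `𝒯` is piecewise quasi-uniform with parameters `(mBar, cBar)`
        (_hpqu : ∃ m ≤ mBar, ∃ β : ℕ → ℕ, β 0 = 0 ∧ β m = r ∧
          (∀ l < m, β l < β (l + 1)) ∧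
          ∀ l < m, ∀ i, β l ≤ i → i < β (l + 1) → ∀ j, β l ≤ j → j < β (l + 1) →
            ξ (i + 1) - ξ i ≤ cBar * (ξ (j + 1) - ξ j))
        (v : ℝ → ℝ) (_hcont : ContinuousOn v (Icc a b))
        -- `v ∈ 𝕊_k(𝒯)`
        (_hpoly : ∀ i < r, ∃ p : Polynomial ℝ, p.natDegree ≤ k ∧
          ∀ t ∈ Ioo (ξ i) (ξ (i + 1)), v t = p.eval t),
        (∫ s in Ioo a b, ∫ t in Ioo a b, (v s - v t) ^ 2 / (s - t) ^ 2) ≤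
          C * ((∑ i ∈ Finset.range r,
                (sSup ((fun t => |v t|) '' Ioo (ξ i) (ξ (i + 1)))) ^ 2) +
              Real.log (1 +
                ((Finset.range r).sup' (Finset.nonempty_range_iff.mpr hr.ne')
                    fun i => ξ (i + 1) - ξ i) /
                ((Finset.range r).inf' (Finset.nonempty_range_iff.mpr hr.ne')
                    fun i => ξ (i + 1) - ξ i)) *
                (sSup ((fun t => |v t|) '' Icc a b)) ^ 2) := by
  obtain ⟨K, hK⟩ := exists_lipschitzOnWith_of_eqOn_polynomial k
  have hlogc : 0 < Real.log (1 + cBar) := Real.log_pos (by linarith)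
  refine ⟨18 * K ^ 2 + 16 * Real.log (1 + cBar) + 16 * mBar, by positivity, ?_⟩
  rintro _ _ - r hr ξ rfl rfl hξ ⟨m, hm, β, hβ₀, hβm, -, hβ⟩ v hcont hpoly
  have hne : (Finset.range r).Nonempty := Finset.nonempty_range_iff.mpr hr.ne'
  have hρ : ∀ i < r, ∀ j < r, (ξ (i + 1) - ξ i) / (ξ (j + 1) - ξ j) ≤
      ((Finset.range r).sup' hne fun i => ξ (i + 1) - ξ i) /
        ((Finset.range r).inf' hne fun i => ξ (i + 1) - ξ i) := fun i hi j hj =>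
    div_le_sup'_div_inf' hne (fun l hl => sub_pos.2 (hξ l (Finset.mem_range.1 hl)))
      (Finset.mem_range.2 hi) (Finset.mem_range.2 hj)
  have hρ₀ := (div_nonneg (sub_pos.2 (hξ 0 hr)).le (sub_pos.2 (hξ 0 hr)).le).trans (hρ 0 hr 0 hr)
  obtain ⟨S, hSm, hS⟩ := exists_finset_neighbours_comparable hβ₀ hβm hβ
  have hL := fun i hi => hK v (ξ i) (ξ (i + 1)) (hξ i hi)
    (hcont.mono (Icc_succ_subset_Icc hξ hi)) (hpoly i hi)
  exact integral_integral_gagliardo_le_of_inverse_estimate hξ hcont hL (zero_le_one.trans hc) hρ₀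
    hρ hS (hSm.trans hm)
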